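/- arXiv:1609.02879 — 2 statements merged into one kernel-verified Lean document; each statement's English description precedes it below -/
import Mathlib

section
/- Let P, Q ∈ R[y] with R real closed and deg P = p ≥ 1. Let Her(P;Q) be the p×p Hermite matrix whose (j₁,j₂) entry is the trace of the multiplication-by-Q(y)·y^{j₁+j₂−2} map on the R-vector space R[y]/(P). Then the signature of the symmetric matrix Her(P;Q) equals the Tarski query TaQu(Q;P) = Σ_{θ: P(θ)=0} sign(Q(θ)). -/
open Polynomial

/-- The sign of a real number as an integer. -/
noncomputable def sgn (a : ℝ) : ℤ := if a < 0 then -1 else if a = 0 then 0 else 1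

/-- The `p × p` Hermite matrix of `P` and `Q`: its `(j₁, j₂)` entry (with `j₁, j₂` zero-based)
is the trace of the multiplication-by-`Q·y^{j₁+j₂}` map on `ℝ[y]/(P)`. -/
noncomputable def HerMat (p : ℕ) (P Q : Polynomial ℝ) : Matrix (Fin p) (Fin p) ℝ :=
  fun j₁ j₂ =>
    LinearMap.trace ℝ (AdjoinRoot P)
      (LinearMap.mulLeft ℝ (AdjoinRoot.mk P (Q * X ^ (j₁.val + j₂.val))))

lemma det_aeval_eq {n : Type*} [Fintype n] [DecidableEq n] (M : Matrix n n ℂ) (g : ℂ[X]) :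
    (aeval M g).det = (M.charpoly.roots.map (fun l => g.eval l)).prod := by
  have hcard : M.charpoly.roots.card = Fintype.card n := by
    rw [IsAlgClosed.card_roots_eq_natDegree, Matrix.charpoly_natDegree_eq_dim]
  have key : ∀ s : Multiset ℂ, (aeval M (s.map (fun r => X - C r)).prod).det =
      (M.charpoly.roots.map (fun l => ((s.map (fun r => X - C r)).prod).eval l)).prod := by
    intro s
    induction s using Multiset.induction_on with
    | empty => simp
    | cons r s ih =>
      simp only [Multiset.map_cons, Multiset.prod_cons, map_mul, Matrix.det_mul, ih, eval_mul,
        Multiset.prod_map_mul]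
      congr 1
      have h1 := (IsAlgClosed.splits M.charpoly).eval_eq_prod_roots_of_monic M.charpoly_monic r
      rw [Matrix.eval_charpoly] at h1
      have h2 : aeval M (X - C r) = -(Matrix.scalar n r - M) := by
        simp [Matrix.algebraMap_eq_diagonal, Pi.algebraMap_def]
      rw [h2, Matrix.det_neg, h1, ← hcard, ← Multiset.card_map (fun x => r - x),
        ← Multiset.prod_map_neg]
      simp
  have hg := (IsAlgClosed.splits g).eq_prod_roots
  rw [hg]
  simp only [map_mul, Matrix.det_mul, key, eval_mul, Multiset.prod_map_mul]
  simp [Matrix.algebraMap_eq_diagonal, Pi.algebraMap_def, hcard]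

lemma trace_aeval_eq {n : Type*} [Fintype n] [DecidableEq n] (M : Matrix n n ℂ) (f : ℂ[X]) :
    (aeval M f).trace = (M.charpoly.roots.map (fun l => f.eval l)).sum := by
  have h : (aeval M f).charpoly =
      ((M.charpoly.roots.map (fun l => f.eval l)).map (fun a => X - C a)).prod := by
    apply Polynomial.funext
    intro z
    rw [Matrix.eval_charpoly]
    have h2 : Matrix.scalar n z - aeval M f = aeval M (C z - f) := by
      simp [Matrix.algebraMap_eq_diagonal, Pi.algebraMap_def]
    rw [h2, det_aeval_eq, eval_multiset_prod]
    simp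
  rw [Matrix.trace_eq_sum_roots_charpoly, h, roots_multiset_prod_X_sub_C]

noncomputable def rootsC (P : ℝ[X]) : Multiset ℂ := (P.map (algebraMap ℝ ℂ)).roots

lemma trace_adjoinRoot (P f : ℝ[X]) (hP : P ≠ 0) :
    ((LinearMap.trace ℝ (AdjoinRoot P) (LinearMap.mulLeft ℝ (AdjoinRoot.mk P f)) : ℝ) : ℂ) =
      ((rootsC P).map (fun l => aeval l f)).sum := by
  classical
  set pb := AdjoinRoot.powerBasis hP with hpb
  have h1 : LinearMap.trace ℝ (AdjoinRoot P) (LinearMap.mulLeft ℝ (AdjoinRoot.mk P f)) =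
      (Algebra.leftMulMatrix pb.basis (AdjoinRoot.mk P f)).trace := by
    rw [← Algebra.trace_eq_matrix_trace]; rfl
  have h2 : AdjoinRoot.mk P f = aeval pb.gen f := by
    rw [hpb, AdjoinRoot.powerBasis_gen, AdjoinRoot.aeval_eq]
  set M := Algebra.leftMulMatrix pb.basis pb.gen with hM
  have h3 : Algebra.leftMulMatrix pb.basis (AdjoinRoot.mk P f) = aeval M f := by
    rw [h2, hM, aeval_algHom_apply]
  have h4 : M.charpoly = P * C P.leadingCoeff⁻¹ := by
    rw [hM, charpoly_leftMulMatrix, hpb, AdjoinRoot.minpoly_powerBasis_gen]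
  have h5 : (aeval M f).map (algebraMap ℝ ℂ) =
      aeval (M.map (algebraMap ℝ ℂ)) (f.map (algebraMap ℝ ℂ)) := by
    have := aeval_algHom_apply ((Algebra.ofId ℝ ℂ).mapMatrix (m := Fin pb.dim)) M f
    rw [aeval_map_algebraMap]
    exact this.symm
  have h6 : (M.map (algebraMap ℝ ℂ)).charpoly.roots = rootsC P := by
    rw [Matrix.charpoly_map, h4, Polynomial.map_mul, map_C, mul_comm, roots_C_mul]
    · rfl
    · simpa using hP
  have h7 := trace_aeval_eq (M.map (algebraMap ℝ ℂ)) (f.map (algebraMap ℝ ℂ))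
  rw [← h5, h6] at h7
  rw [h1, h3]
  simp only [eval_map_algebraMap] at h7
  rw [← h7]
  exact (AddMonoidHom.map_trace (algebraMap ℝ ℂ) (aeval M f))

/-- inertia upper bound -/
lemma inertia_le {n κ : Type*} [Fintype n] [DecidableEq n] [Fintype κ] (A : Matrix n n ℝ)
    (hA : A.IsHermitian) (e : ℝ) (l : (n → ℝ) →ₗ[ℝ] (κ → ℝ))
    (h : ∀ v, l v = 0 → e * (v ⬝ᵥ A.mulVec v) ≤ 0) :
    (Finset.univ.filter (fun i => 0 < e * hA.eigenvalues i)).card ≤ Fintype.card κ := by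
  by_contra hlt
  push Not at hlt
  let T := {i // 0 < e * hA.eigenvalues i}
  have hT : Fintype.card κ < Fintype.card T := by
    rwa [Fintype.card_subtype]
  let U : Matrix n n ℝ := (hA.eigenvectorUnitary : Matrix n n ℝ)
  let E : (T → ℝ) →ₗ[ℝ] (n → ℝ) :=
    { toFun := fun c i => if hi : 0 < e * hA.eigenvalues i then c ⟨i, hi⟩ else 0
      map_add' := by intro a b; ext i; by_cases hi : 0 < e * hA.eigenvalues i <;> simp [hi]
      map_smul' := by intro a b; ext i; by_cases hi : 0 < e * hA.eigenvalues i <;> simp [hi] }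
  have hk := LinearMap.ker_ne_bot_of_finrank_lt (f := l ∘ₗ U.mulVecLin ∘ₗ E) (by simpa using hT)
  obtain ⟨c, hc, hc0⟩ := (Submodule.ne_bot_iff _).1 hk
  have hv := h (U.mulVec (E c)) (by simpa using hc)
  have hd : U.transpose * A * U = Matrix.diagonal hA.eigenvalues := by
    have := hA.conjStarAlgAut_star_eigenvectorUnitary
    rw [Unitary.conjStarAlgAut_star_apply] at this
    exact this
  have hq : (U.mulVec (E c)) ⬝ᵥ A.mulVec (U.mulVec (E c)) =
      ∑ i, hA.eigenvalues i * (E c i)^2 := by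
    have : U.mulVec (E c) ⬝ᵥ A.mulVec (U.mulVec (E c)) =
        E c ⬝ᵥ (U.transpose * A * U).mulVec (E c) := by
      rw [← Matrix.mulVec_mulVec, ← Matrix.mulVec_mulVec, Matrix.dotProduct_mulVec _ U.transpose,
        Matrix.vecMul_transpose]
    rw [this, hd]
    simp only [dotProduct, Matrix.mulVec_diagonal]
    exact Finset.sum_congr rfl fun i _ => by ring
  rw [hq, Finset.mul_sum] at hv
  have hE : ∀ i : T, E c i = c i := fun i => by simp [E, i.2]
  have hnn : ∀ i ∈ Finset.univ, 0 ≤ e * (hA.eigenvalues i * (E c i)^2) := by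
    intro i _
    by_cases hi : 0 < e * hA.eigenvalues i
    · rw [← mul_assoc]; positivity
    · simp [E, hi]
  have hz := (Finset.sum_eq_zero_iff_of_nonneg hnn).1 (le_antisymm hv (Finset.sum_nonneg hnn))
  apply hc0
  ext i
  have := hz i (Finset.mem_univ _)
  rw [hE, ← mul_assoc] at this
  simpa [i.2.ne'] using this

lemma herMat_eq (P Q : ℝ[X]) (p : ℕ) (hP : P ≠ 0) (i j : Fin p) :
    ((HerMat p P Q i j : ℝ) : ℂ) = ∑ t ∈ (rootsC P).toFinset,
      ((rootsC P).count t : ℂ) * aeval t Q * t ^ (i : ℕ) * t ^ (j : ℕ) := by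
  unfold HerMat
  rw [trace_adjoinRoot P _ hP, Finset.sum_multiset_map_count]
  refine Finset.sum_congr rfl fun t _ => ?_
  simp [pow_add, mul_assoc]

/-- evaluation at `t` of the polynomial with coefficient vector `v`. -/
noncomputable def evC (p : ℕ) (t : ℂ) : (Fin p → ℝ) →ₗ[ℝ] ℂ :=
  ∑ j : Fin p, (LinearMap.proj j : (Fin p → ℝ) →ₗ[ℝ] ℝ).smulRight (t ^ (j : ℕ))

lemma evC_apply (p : ℕ) (t : ℂ) (v : Fin p → ℝ) : evC p t v = ∑ j, (v j : ℂ) * t ^ (j : ℕ) := by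
  simp [evC]

lemma evC_conj (p : ℕ) (t : ℂ) (v : Fin p → ℝ) :
    evC p (starRingEnd ℂ t) v = starRingEnd ℂ (evC p t v) := by
  simp [evC_apply]

lemma aeval_conj' (Q : ℝ[X]) (t : ℂ) : aeval (starRingEnd ℂ t) Q = starRingEnd ℂ (aeval t Q) :=
  Polynomial.aeval_conj Q t

lemma conj_mem (P : ℝ[X]) (t : ℂ) (h : t ∈ rootsC P) : starRingEnd ℂ t ∈ rootsC P := by
  unfold rootsC at *
  rw [mem_roots', IsRoot, eval_map_algebraMap] at *
  refine ⟨h.1, ?_⟩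
  rw [aeval_conj', h.2, map_zero]

lemma form_eq (P Q : ℝ[X]) (p : ℕ) (hP : P ≠ 0) (v : Fin p → ℝ) :
    v ⬝ᵥ (HerMat p P Q).mulVec v = ∑ t ∈ (rootsC P).toFinset,
      ((rootsC P).count t : ℝ) * (aeval t Q * (evC p t v) ^ 2).re := by
  have h : ((v ⬝ᵥ (HerMat p P Q).mulVec v : ℝ) : ℂ) = ∑ t ∈ (rootsC P).toFinset,
      ((rootsC P).count t : ℂ) * (aeval t Q * (evC p t v) ^ 2) := by
    have hR : ∀ t ∈ (rootsC P).toFinset,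
        ((rootsC P).count t : ℂ) * (aeval t Q * (evC p t v) ^ 2) =
        ∑ i : Fin p, ∑ j : Fin p, (v i : ℂ) * (((rootsC P).count t : ℂ) * aeval t Q * t ^ (i : ℕ) * t ^ (j : ℕ)
          * (v j : ℂ)) := by
      intro t _
      rw [evC_apply, sq, Finset.sum_mul_sum, Finset.mul_sum, Finset.mul_sum]
      refine Finset.sum_congr rfl fun i _ => ?_
      rw [Finset.mul_sum, Finset.mul_sum]
      exact Finset.sum_congr rfl fun j _ => by ring
    rw [Finset.sum_congr rfl hR, Finset.sum_comm]
    simp only [dotProduct, Matrix.mulVec, Complex.ofReal_sum, Complex.ofReal_mul]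
    refine Finset.sum_congr rfl fun i _ => ?_
    rw [Finset.sum_comm, Finset.mul_sum]
    refine Finset.sum_congr rfl fun j _ => ?_
    rw [herMat_eq P Q p hP, Finset.sum_mul, Finset.mul_sum]
  have := congrArg Complex.re h
  rw [Complex.ofReal_re, Complex.re_sum] at this
  rw [this]
  refine Finset.sum_congr rfl fun t _ => ?_
  rw [← Complex.ofReal_natCast, Complex.re_ofReal_mul]

/-- index set -/
noncomputable def idx (P Q : ℝ[X]) (e : ℝ) : Finset ℂ := by
  classical
  exact (rootsC P).toFinset.filter
    (fun t => (t.im = 0 ∧ 0 < e * (aeval t Q).re) ∨ (0 < t.im ∧ aeval t Q ≠ 0))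

lemma mem_idx (P Q : ℝ[X]) (e : ℝ) (t : ℂ) : t ∈ idx P Q e ↔ t ∈ rootsC P ∧
    ((t.im = 0 ∧ 0 < e * (aeval t Q).re) ∨ (0 < t.im ∧ aeval t Q ≠ 0)) := by
  simp [idx]

lemma count_le (P Q : ℝ[X]) (p : ℕ) (hP : P ≠ 0) (e : ℝ)
    (hsym : (HerMat p P Q).IsHermitian) :
    (Finset.univ.filter (fun i => 0 < e * hsym.eigenvalues i)).card ≤ (idx P Q e).card := by
  have hs : ∀ t : ℂ, ∃ s : ℂ, s ^ 2 = e * aeval t Q := fun t =>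
    IsAlgClosed.exists_pow_nat_eq _ two_pos
  choose s hs using hs
  let l : (Fin p → ℝ) →ₗ[ℝ] (idx P Q e → ℝ) := LinearMap.pi fun t =>
    Complex.reLm ∘ₗ (LinearMap.mulLeft ℝ (s t.1)) ∘ₗ evC p t.1
  rw [← Fintype.card_coe (idx P Q e)]
  refine inertia_le _ hsym e l fun v hv => ?_
  rw [form_eq P Q p hP, Finset.mul_sum]
  refine Finset.sum_nonpos fun t ht => ?_
  have ht' : t ∈ rootsC P := by simpa using ht
  have key : ∀ t ∈ idx P Q e, e * (aeval t Q * (evC p t v) ^ 2).re ≤ 0 := by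
    intro t ht
    have h0 : (s t * evC p t v).re = 0 := by
      have := congrFun hv ⟨t, ht⟩
      simpa [l] using this
    have h1 : e * (aeval t Q * (evC p t v) ^ 2).re = ((s t * evC p t v)^2).re := by
      rw [mul_pow, hs, mul_assoc, Complex.re_ofReal_mul]
    rw [h1, sq, Complex.mul_re, h0]
    nlinarith [mul_self_nonneg (s t * evC p t v).im]
  have main : e * (aeval t Q * (evC p t v) ^ 2).re ≤ 0 := by
    by_cases hQ : aeval t Q = 0
    · simp [hQ]
    rcases lt_trichotomy t.im 0 with him | him | him
    · have := key (starRingEnd ℂ t) ((mem_idx _ _ _ _).2 ⟨conj_mem P t ht', Or.inr ⟨by simpa using him, by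
        rw [aeval_conj']; simpa using hQ⟩⟩)
      rw [aeval_conj', evC_conj, ← map_pow, ← map_mul, Complex.conj_re] at this
      exact this
    · by_cases hpos : 0 < e * (aeval t Q).re
      · exact key t ((mem_idx _ _ _ _).2 ⟨ht', Or.inl ⟨him, hpos⟩⟩)
      · have hreal : starRingEnd ℂ t = t := Complex.conj_eq_iff_im.2 him
        have h1 : (evC p t v).im = 0 := by
          rw [← Complex.conj_eq_iff_im, ← evC_conj, hreal]
        have h2 : (aeval t Q).im = 0 := by
          rw [← Complex.conj_eq_iff_im, ← aeval_conj', hreal]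
        simp only [sq, Complex.mul_re, Complex.mul_im, h1, h2]
        push Not at hpos
        nlinarith [mul_nonneg (sub_nonneg.2 hpos) (mul_self_nonneg (evC p t v).re)]
    · exact key t ((mem_idx _ _ _ _).2 ⟨ht', Or.inr ⟨him, hQ⟩⟩)
  calc _ = ((rootsC P).count t : ℝ) * (e * (aeval t Q * (evC p t v) ^ 2).re) := by ring
    _ ≤ 0 := mul_nonpos_of_nonneg_of_nonpos (by positivity) main

lemma rank_ge (P Q : ℝ[X]) (p : ℕ) (hP : P ≠ 0) (hdeg : P.natDegree = p) (hp : 1 ≤ p)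
    (hsym : (HerMat p P Q).IsHermitian) :
    ((rootsC P).toFinset.filter (fun t => aeval t Q ≠ 0)).card ≤
      (Finset.univ.filter (fun i => hsym.eigenvalues i ≠ 0)).card := by
  classical
  set S := (rootsC P).toFinset with hS
  let d : S → ℂ := fun t => ((rootsC P).count t.1 : ℂ) * aeval t.1 Q
  let V : Matrix S (Fin p) ℂ := fun t j => t.1 ^ (j : ℕ)
  let W : Matrix (Fin p) S ℂ := fun j t => (Lagrange.basis S id t.1).coeff j
  have hSp : S.card ≤ p := by
    calc S.card ≤ (rootsC P).card := Multiset.toFinset_card_le _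
      _ ≤ (P.map (algebraMap ℝ ℂ)).natDegree := card_roots' _
      _ = p := by rw [natDegree_map, hdeg]
  have hVW : V * W = 1 := by
    ext a b
    have hinj : Set.InjOn (id : ℂ → ℂ) S := Function.injective_id.injOn
    have hb : (Lagrange.basis S id b.1).natDegree < p := by
      rw [natDegree_eq_of_degree_eq_some (Lagrange.degree_basis hinj b.2)]
      omega
    have h1 := eval_eq_sum_range' hb a.1
    rw [Finset.sum_range] at h1
    have h2 : (V * W) a b = eval a.1 (Lagrange.basis S id b.1) := by
      rw [Matrix.mul_apply, h1]
      exact Finset.sum_congr rfl fun j _ => mul_comm _ _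
    rw [h2]
    by_cases hab : a = b
    · subst hab
      rw [Matrix.one_apply_eq]
      exact Lagrange.eval_basis_self hinj a.2
    · rw [Matrix.one_apply_ne hab]
      exact Lagrange.eval_basis_of_ne (v := id) (fun h => hab (Subtype.ext h.symm)) a.2
  have hH : (HerMat p P Q).map (algebraMap ℝ ℂ) = V.transpose * Matrix.diagonal d * V := by
    ext i j
    rw [Matrix.map_apply, Matrix.mul_apply]
    simp only [Matrix.mul_diagonal, Matrix.transpose_apply]
    refine (herMat_eq P Q p hP i j).trans ?_
    rw [← Finset.sum_coe_sort]
    exact Finset.sum_congr rfl fun t _ => by simp only [V, d]; ring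
  have hD : Matrix.diagonal d = W.transpose * (HerMat p P Q).map (algebraMap ℝ ℂ) * W := by
    rw [hH]
    have : W.transpose * V.transpose = 1 := by
      rw [← Matrix.transpose_mul, hVW, Matrix.transpose_one]
    calc _ = (W.transpose * V.transpose) * Matrix.diagonal d * (V * W) := by rw [this, hVW]; simp
      _ = _ := by simp only [Matrix.mul_assoc]
  let U : Matrix (Fin p) (Fin p) ℝ := (hsym.eigenvectorUnitary : Matrix _ _ ℝ)
  have hspec : HerMat p P Q = U * Matrix.diagonal hsym.eigenvalues * star U := by
    have := hsym.spectral_theorem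
    rw [Unitary.conjStarAlgAut_apply] at this
    exact this
  have hmap : (HerMat p P Q).map (algebraMap ℝ ℂ) = U.map (algebraMap ℝ ℂ) *
      Matrix.diagonal (fun i => (hsym.eigenvalues i : ℂ)) * (star U).map (algebraMap ℝ ℂ) := by
    conv_lhs => rw [hspec]
    rw [Matrix.map_mul, Matrix.map_mul, Matrix.diagonal_map (map_zero _)]
    rfl
  have hr : (Matrix.diagonal d).rank ≤
      (Matrix.diagonal (fun i => (hsym.eigenvalues i : ℂ))).rank := by
    rw [hD]
    refine (Matrix.rank_mul_le_left _ _).trans ((Matrix.rank_mul_le_right _ _).trans ?_)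
    rw [hmap]
    exact (Matrix.rank_mul_le_left _ _).trans (Matrix.rank_mul_le_right _ _)
  rw [Matrix.rank_diagonal, Matrix.rank_diagonal] at hr
  have e1 : Fintype.card {i // (hsym.eigenvalues i : ℂ) ≠ 0} =
      (Finset.univ.filter (fun i => hsym.eigenvalues i ≠ 0)).card := by
    rw [Fintype.card_subtype]; simp
  have e2 : Fintype.card {i // d i ≠ 0} = (S.filter (fun t => aeval t Q ≠ 0)).card := by
    rw [Fintype.card_subtype]
    refine Finset.card_bij (fun a _ => a.1) ?_ ?_ ?_
    · intro a ha
      simp only [Finset.mem_filter, Finset.mem_univ, true_and, d] at ha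
      exact Finset.mem_filter.2 ⟨a.2, right_ne_zero_of_mul ha⟩
    · intro a _ b _ h
      exact Subtype.ext h
    · intro b hb
      obtain ⟨hb1, hb2⟩ := Finset.mem_filter.1 hb
      refine ⟨⟨b, hb1⟩, ?_, rfl⟩
      simp only [Finset.mem_filter, Finset.mem_univ, true_and, d]
      refine mul_ne_zero ?_ hb2
      have : 0 < (rootsC P).count b := Multiset.count_pos.2 (by simpa [hS] using hb1)
      exact_mod_cast this.ne'
  rw [← e1, ← e2]
  exact hr

/-- real roots at which `e * Q` is positive -/
noncomputable def realIdx (P Q : ℝ[X]) (e : ℝ) : Finset ℝ := by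
  classical exact P.roots.toFinset.filter (fun t => 0 < e * Q.eval t)

noncomputable def upIdx (P Q : ℝ[X]) : Finset ℂ := by
  classical exact (rootsC P).toFinset.filter (fun t => 0 < t.im ∧ aeval t Q ≠ 0)

lemma aeval_ofReal' (Q : ℝ[X]) (x : ℝ) : aeval (x : ℂ) Q = ((Q.eval x : ℝ) : ℂ) := by
  have := aeval_algebraMap_apply ℂ x Q
  simpa using this

lemma ofReal_mem (P : ℝ[X]) (x : ℝ) : (x : ℂ) ∈ rootsC P ↔ x ∈ P.roots := by
  unfold rootsC
  rw [mem_roots', mem_roots', IsRoot, IsRoot, eval_map_algebraMap, aeval_ofReal',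
    Polynomial.map_ne_zero_iff (algebraMap ℝ ℂ).injective]
  simp

lemma idx_card (P Q : ℝ[X]) (e : ℝ) :
    (idx P Q e).card = (realIdx P Q e).card + (upIdx P Q).card := by
  classical
  have h : idx P Q e = (realIdx P Q e).image (fun x : ℝ => (x : ℂ)) ∪ upIdx P Q := by
    ext t
    rw [mem_idx]
    simp only [realIdx, upIdx, Finset.mem_union, Finset.mem_image, Finset.mem_filter,
      Multiset.mem_toFinset]
    constructor
    · rintro ⟨h1, ⟨h2, h3⟩ | h2⟩
      · left
        have : t = (t.re : ℂ) := Complex.ext rfl (by simpa using h2)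
        rw [this] at h1 h3
        rw [aeval_ofReal', Complex.ofReal_re] at h3
        exact ⟨t.re, ⟨(ofReal_mem _ _).1 h1, h3⟩, this.symm⟩
      · exact Or.inr ⟨h1, h2⟩
    · rintro (⟨x, ⟨h1, h2⟩, rfl⟩ | ⟨h1, h2⟩)
      · exact ⟨(ofReal_mem _ _).2 h1, Or.inl ⟨by simp, by rwa [aeval_ofReal', Complex.ofReal_re]⟩⟩
      · exact ⟨h1, Or.inr h2⟩
  rw [h, Finset.card_union_of_disjoint, Finset.card_image_of_injective _ Complex.ofReal_injective]
  rw [Finset.disjoint_left]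
  intro t h1 h2
  obtain ⟨x, -, rfl⟩ := Finset.mem_image.1 h1
  simp [upIdx] at h2

lemma total_card (P Q : ℝ[X]) :
    ((rootsC P).toFinset.filter (fun t => aeval t Q ≠ 0)).card =
      (idx P Q 1).card + (idx P Q (-1)).card := by
  classical
  have hc : ((upIdx P Q).image (starRingEnd ℂ)).card = (upIdx P Q).card :=
    Finset.card_image_of_injective _ (starRingEnd ℂ).injective
  have h : (rootsC P).toFinset.filter (fun t => aeval t Q ≠ 0) =
      idx P Q 1 ∪ ((realIdx P Q (-1)).image (fun x : ℝ => (x : ℂ)) ∪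
        (upIdx P Q).image (starRingEnd ℂ)) := by
    ext t
    simp only [Finset.mem_union, mem_idx, realIdx, upIdx, Finset.mem_image, Finset.mem_filter,
      Multiset.mem_toFinset]
    constructor
    · rintro ⟨h1, h2⟩
      rcases lt_trichotomy t.im 0 with him | him | him
      · right; right
        exact ⟨starRingEnd ℂ t, ⟨conj_mem _ _ h1, by simpa using him, by
          rw [aeval_conj']; simpa using h2⟩, by simp⟩
      · have : t = (t.re : ℂ) := Complex.ext rfl (by simpa using him)
        rw [this] at h1 h2
        rw [aeval_ofReal'] at h2
        have h2' : Q.eval t.re ≠ 0 := by exact_mod_cast h2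
        rcases lt_or_gt_of_ne h2' with hn | hn
        · right; left
          exact ⟨t.re, ⟨(ofReal_mem _ _).1 h1, by linarith⟩, this.symm⟩
        · left
          rw [this]
          refine ⟨h1, Or.inl ⟨by simp, ?_⟩⟩
          rw [aeval_ofReal', Complex.ofReal_re]; linarith
      · left
        exact ⟨h1, Or.inr ⟨him, h2⟩⟩
    · rintro (⟨h1, ⟨h2, h3⟩ | h2⟩ | ⟨x, ⟨h1, h2⟩, rfl⟩ | ⟨x, ⟨h1, h2, h3⟩, rfl⟩)
      · refine ⟨h1, fun h => ?_⟩
        simp [h] at h3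
      · exact ⟨h1, h2.2⟩
      · refine ⟨(ofReal_mem _ _).2 h1, fun h => ?_⟩
        rw [aeval_ofReal'] at h
        have h' : Q.eval x = 0 := by exact_mod_cast h
        simp [h'] at h2
      · exact ⟨conj_mem _ _ h1, by rw [aeval_conj']; simpa using h3⟩
  rw [h, Finset.card_union_of_disjoint, Finset.card_union_of_disjoint, hc,
    Finset.card_image_of_injective _ Complex.ofReal_injective, idx_card P Q (-1)]
  · rw [Finset.disjoint_left]
    intro t h1 h2
    obtain ⟨x, -, rfl⟩ := Finset.mem_image.1 h1
    obtain ⟨y, hy, hxy⟩ := Finset.mem_image.1 h2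
    simp only [upIdx, Finset.mem_filter] at hy
    have := congrArg Complex.im hxy
    simp at this
    linarith [hy.2.1]
  · rw [Finset.disjoint_left]
    intro t h1 h2
    rw [mem_idx] at h1
    rcases Finset.mem_union.1 h2 with h2 | h2
    · obtain ⟨x, hx, rfl⟩ := Finset.mem_image.1 h2
      simp only [realIdx, Finset.mem_filter] at hx
      rcases h1.2 with h3 | h3
      · rw [aeval_ofReal', Complex.ofReal_re] at h3
        linarith [h3.2, hx.2]
      · simp at h3
    · obtain ⟨x, hx, rfl⟩ := Finset.mem_image.1 h2
      simp only [upIdx, Finset.mem_filter] at hx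
      rcases h1.2 with h3 | h3
      · have := h3.1
        simp at this
        linarith [hx.2.1]
      · have := h3.1
        simp at this
        linarith [hx.2.1]

lemma sum_sgn (P Q : ℝ[X]) : ∑ t ∈ P.roots.toFinset, sgn (Q.eval t) =
    ((realIdx P Q 1).card : ℤ) - (realIdx P Q (-1)).card := by
  classical
  simp only [realIdx, Finset.card_filter, Nat.cast_sum, ← Finset.sum_sub_distrib]
  refine Finset.sum_congr rfl fun t _ => ?_
  unfold sgn
  rcases lt_trichotomy (Q.eval t) 0 with h | h | h
  · simp [h, not_lt.2 h.le]
  · simp [h]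
  · simp [h, h.ne', not_lt.2 h.le]

/-- Hermite's theorem: the signature of the symmetric Hermite matrix `Her(P;Q)` (number of
positive eigenvalues minus number of negative eigenvalues) equals the Tarski query
`TaQu(Q;P) = Σ_{θ : P(θ)=0} sign (Q(θ))`. -/
theorem hermite_signature_eq_tarski_query (P Q : Polynomial ℝ) (p : ℕ)
    (hdeg : P.natDegree = p) (hp : 1 ≤ p)
    (hsym : (HerMat p P Q).IsHermitian) :
    ((Finset.univ.filter (fun i => 0 < hsym.eigenvalues i)).card : ℤ) -
      ((Finset.univ.filter (fun i => hsym.eigenvalues i < 0)).card : ℤ) =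
    ∑ θ ∈ P.roots.toFinset, sgn (Q.eval θ) := by
  have hP : P ≠ 0 := by
    rintro rfl
    simp at hdeg
    omega
  have h1 := count_le P Q p hP 1 hsym
  have h2 := count_le P Q p hP (-1) hsym
  have h3 := rank_ge P Q p hP hdeg hp hsym
  rw [total_card] at h3
  have h4 : (Finset.univ.filter (fun i => hsym.eigenvalues i ≠ 0)).card =
      (Finset.univ.filter (fun i => 0 < hsym.eigenvalues i)).card +
      (Finset.univ.filter (fun i => hsym.eigenvalues i < 0)).card := by
    rw [← Finset.card_union_of_disjoint]
    · congr 1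
      ext i
      simp only [Finset.mem_filter, Finset.mem_univ, true_and, Finset.mem_union]
      rw [ne_iff_lt_or_gt, or_comm]
    · rw [Finset.disjoint_filter]
      intro i _ h h'
      linarith
  simp only [one_mul, neg_mul, Left.neg_pos_iff] at h1 h2
  have h5 := idx_card P Q 1
  have h6 := idx_card P Q (-1)
  rw [sum_sgn]
  omega
end

section
/- Let P, Q ∈ D[u,y] with deg_y P = p ≥ 1 and deg_y Q = q, where u = (u₁,…,u_ℓ). Then for 1 ≤ j₁, j₂ ≤ p, the quantity c_p(u)^{q+2p−2} · Her(P;Q)_{j₁,j₂}, a priori in the fraction field D(u), is a polynomial in D[u], of degree at most (q+2p−2)·deg_u P + deg_u Q in u. -/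
open Polynomial

/-- `deg_u P`: the maximum total degree in the parameters `u` of the coefficients of
`P ∈ D[u][y]`. -/
noncomputable def degU {ℓ : ℕ} {D : Type*} [CommRing D]
    (P : Polynomial (MvPolynomial (Fin ℓ) D)) : ℕ :=
  P.support.sup fun i => (P.coeff i).totalDegree

/-- The `(j₁, j₂)` entry (zero-based) of the Hermite matrix of `P` and `Q` over the fraction
field `D(u)`: the trace of multiplication by `Q·y^{j₁+j₂}` on `D(u)[y]/(P)`. -/
noncomputable def herEntry {ℓ : ℕ} {D : Type*} [CommRing D] [IsDomain D]
    (P Q : Polynomial (MvPolynomial (Fin ℓ) D)) (j₁ j₂ : ℕ) :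
    FractionRing (MvPolynomial (Fin ℓ) D) :=
  let K := FractionRing (MvPolynomial (Fin ℓ) D)
  let Pk := P.map (algebraMap (MvPolynomial (Fin ℓ) D) K)
  let Qk := Q.map (algebraMap (MvPolynomial (Fin ℓ) D) K)
  LinearMap.trace K (AdjoinRoot Pk)
    (LinearMap.mulLeft K (AdjoinRoot.mk Pk (Qk * X ^ (j₁ + j₂))))

lemma degU_coeff {ℓ : ℕ} {D : Type*} [CommRing D]
    (P : Polynomial (MvPolynomial (Fin ℓ) D)) (i : ℕ) : (P.coeff i).totalDegree ≤ degU P := by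
  by_cases h : P.coeff i = 0
  · simp [h]
  · exact Finset.le_sup (f := fun i => (P.coeff i).totalDegree) (mem_support_iff.2 h)

lemma matpow_deg {ℓ : ℕ} {D : Type*} [CommRing D] {n : Type*} [Fintype n] [DecidableEq n]
    (M : Matrix n n (MvPolynomial (Fin ℓ) D)) (d : ℕ) (hM : ∀ i j, (M i j).totalDegree ≤ d)
    (k : ℕ) : ∀ i j, ((M ^ k) i j).totalDegree ≤ k * d := by
  induction k with
  | zero =>
    intro i j
    rw [pow_zero, Matrix.one_apply]
    split_ifs <;> simp
  | succ k ih =>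
    intro i j
    rw [pow_succ, Matrix.mul_apply]
    refine MvPolynomial.totalDegree_finsetSum_le fun x _ => ?_
    refine (MvPolynomial.totalDegree_mul _ _).trans ?_
    have h1 := ih i x
    have h2 := hM x j
    rw [Nat.succ_mul]
    omega

lemma trace_pow_poly {ℓ : ℕ} {D : Type*} [CommRing D] [IsDomain D]
    (P : Polynomial (MvPolynomial (Fin ℓ) D)) (hp : 1 ≤ P.natDegree) (k : ℕ) :
    ∃ g : MvPolynomial (Fin ℓ) D, g.totalDegree ≤ k * degU P ∧
      algebraMap (MvPolynomial (Fin ℓ) D) (FractionRing (MvPolynomial (Fin ℓ) D)) g =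
        (algebraMap (MvPolynomial (Fin ℓ) D) (FractionRing (MvPolynomial (Fin ℓ) D))
            P.leadingCoeff) ^ k *
        Algebra.trace (FractionRing (MvPolynomial (Fin ℓ) D))
          (AdjoinRoot (P.map (algebraMap (MvPolynomial (Fin ℓ) D)
            (FractionRing (MvPolynomial (Fin ℓ) D)))))
          (AdjoinRoot.root _ ^ k) := by
  set K := FractionRing (MvPolynomial (Fin ℓ) D) with hK
  set φ := algebraMap (MvPolynomial (Fin ℓ) D) K with hφ
  have hinj : Function.Injective φ := IsFractionRing.injective _ _
  set Pk := P.map φ with hPk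
  have hP0 : P ≠ 0 := by rintro rfl; simp at hp
  have hPk0 : Pk ≠ 0 := (Polynomial.map_ne_zero_iff hinj).2 hP0
  have hlc : Pk.leadingCoeff = φ P.leadingCoeff := leadingCoeff_map_of_injective hinj P
  have hlc0 : φ P.leadingCoeff ≠ 0 := by rw [← hlc]; exact leadingCoeff_ne_zero.2 hPk0
  set pb := AdjoinRoot.powerBasis hPk0 with hpb
  let M : Matrix (Fin pb.dim) (Fin pb.dim) (MvPolynomial (Fin ℓ) D) :=
    Matrix.of fun i j => if (j : ℕ) + 1 = pb.dim then - P.coeff i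
      else if (i : ℕ) = j + 1 then P.leadingCoeff else 0
  have hM : φ.mapMatrix M = φ P.leadingCoeff • Algebra.leftMulMatrix pb.basis pb.gen := by
    rw [PowerBasis.leftMulMatrix]
    ext i j
    have hmin : pb.minpolyGen = Pk * C (Pk.leadingCoeff⁻¹) := by
      rw [PowerBasis.minpolyGen_eq, AdjoinRoot.minpoly_powerBasis_gen]
    simp only [RingHom.mapMatrix_apply, Matrix.map_apply, M, Matrix.of_apply, Matrix.smul_apply,
      smul_eq_mul, hmin, coeff_mul_C]
    split_ifs
    · have hc : Pk.coeff i = φ (P.coeff i) := coeff_map _ _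
      rw [hlc, map_neg, hc]
      rw [mul_neg, mul_left_comm, mul_inv_cancel₀ hlc0, mul_one]
    · simp
    · simp
  refine ⟨(M ^ k).trace, ?_, ?_⟩
  · refine MvPolynomial.totalDegree_finsetSum_le fun x _ => ?_
    refine matpow_deg M _ (fun i j => ?_) k x x
    simp only [M, Matrix.of_apply]
    split_ifs
    · rw [MvPolynomial.totalDegree_neg]; exact degU_coeff P _
    · exact degU_coeff P _
    · simp
  · have hroot : AdjoinRoot.root Pk = pb.gen := rfl
    rw [hroot, Algebra.trace_eq_matrix_trace pb.basis, map_pow, ← smul_eq_mul,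
      ← Matrix.trace_smul, ← _root_.smul_pow, ← hM,
      ← map_pow φ.mapMatrix M k]
    exact AddMonoidHom.map_trace φ (M ^ k)

/-- Let `P, Q ∈ D[u][y]` with `deg_y P = p ≥ 1`, `deg_y Q = q`. Then
`c_p(u)^{q+2p-2} · Her(P;Q)_{j₁,j₂}`, a priori in `D(u)`, is a polynomial in `D[u]` of total
degree at most `(q+2p-2)·deg_u P + deg_u Q`. -/
theorem herEntry_poly {ℓ : ℕ} {D : Type*} [CommRing D] [IsDomain D]
    (P Q : Polynomial (MvPolynomial (Fin ℓ) D)) (p q : ℕ)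
    (hP : P.natDegree = p) (hp : 1 ≤ p) (hQ : Q.natDegree = q) (j₁ j₂ : Fin p) :
    ∃ g : MvPolynomial (Fin ℓ) D,
      g.totalDegree ≤ (q + 2 * p - 2) * degU P + degU Q ∧
      algebraMap (MvPolynomial (Fin ℓ) D) (FractionRing (MvPolynomial (Fin ℓ) D)) g =
        (algebraMap (MvPolynomial (Fin ℓ) D) (FractionRing (MvPolynomial (Fin ℓ) D))
            (P.coeff p)) ^ (q + 2 * p - 2) * herEntry P Q j₁.val j₂.val := by
  classical
  subst hP hQ
  set K := FractionRing (MvPolynomial (Fin ℓ) D) with hK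
  set φ := algebraMap (MvPolynomial (Fin ℓ) D) K with hφ
  choose g hg1 hg2 using trace_pow_poly P hp
  set N := Q.natDegree + 2 * P.natDegree - 2 with hN
  set j := j₁.val + j₂.val with hj
  have hle : ∀ h ∈ Finset.range (Q.natDegree + 1), h + j ≤ N := by
    intro h hh
    rw [Finset.mem_range] at hh
    have := j₁.isLt
    have := j₂.isLt
    omega
  have hH : herEntry P Q j₁ j₂ = ∑ h ∈ Finset.range (Q.natDegree + 1),
      φ (Q.coeff h) * Algebra.trace K (AdjoinRoot (P.map φ)) (AdjoinRoot.root _ ^ (h + j)) := by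
    have h0 : herEntry P Q j₁ j₂ = Algebra.trace K (AdjoinRoot (P.map φ))
      (AdjoinRoot.mk (P.map φ) (Q.map φ * X ^ j)) := rfl
    rw [h0]
    conv_lhs => rw [Q.as_sum_range_C_mul_X_pow]
    simp only [Polynomial.map_sum, Polynomial.map_mul, Polynomial.map_pow, map_C, map_X,
      Finset.sum_mul, map_sum, mul_assoc, ← pow_add]
    refine Finset.sum_congr rfl fun h _ => ?_
    have h1 : AdjoinRoot.mk (P.map φ) (C (φ (Q.coeff h)) * X ^ (h + j))
        = φ (Q.coeff h) • AdjoinRoot.root (P.map φ) ^ (h + j) := by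
      rw [map_mul, map_pow, AdjoinRoot.mk_C, AdjoinRoot.mk_X, Algebra.smul_def]
      rfl
    rw [h1, map_smul, smul_eq_mul]
  refine ⟨∑ h ∈ Finset.range (Q.natDegree + 1),
    Q.coeff h * (P.leadingCoeff ^ (N - (h + j)) * g (h + j)), ?_, ?_⟩
  · refine MvPolynomial.totalDegree_finsetSum_le fun h hh => ?_
    have h1 := degU_coeff Q h
    have h2 := hg1 (h + j)
    have h3 := MvPolynomial.totalDegree_pow P.leadingCoeff (N - (h + j))
    have h4 : (N - (h + j)) * P.leadingCoeff.totalDegree ≤ (N - (h + j)) * degU P :=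
      Nat.mul_le_mul_left _ (degU_coeff P _)
    have h5 := MvPolynomial.totalDegree_mul (Q.coeff h)
      (P.leadingCoeff ^ (N - (h + j)) * g (h + j))
    have h6 := MvPolynomial.totalDegree_mul (P.leadingCoeff ^ (N - (h + j))) (g (h + j))
    have h7 : N * degU P = (N - (h + j)) * degU P + (h + j) * degU P := by
      rw [← Nat.add_mul, Nat.sub_add_cancel (hle h hh)]
    omega
  · rw [hH, map_sum, Finset.mul_sum]
    refine Finset.sum_congr rfl fun h hh => ?_
    have h7 : φ P.leadingCoeff ^ N
        = φ P.leadingCoeff ^ (N - (h + j)) * φ P.leadingCoeff ^ (h + j) := by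
      rw [← pow_add, Nat.sub_add_cancel (hle h hh)]
    rw [map_mul, map_mul, map_pow, hg2, coeff_natDegree, h7]
    ring
end
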